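/- Let G be a finite connected graph on n vertices and m edges in which every vertex has even degree, with minimum degree δ and maximum degree Δ, and suppose G is ℓ-good. Then there exist constants c, C > 0 such that, setting τ* = C·m·(1 + Δ·log n/(δ·min(ℓ, log n)·(1−λmax))), for every rule A and every start vertex, the probability that some vertex of G remains unvisited after τ* steps of the E-process is at most c/n^3. In particular, if Δ is bounded by a constant, then τ* = B·n·(1 + log n/(min(ℓ, log n)·(1−λmax))) for a constant B, and this value of τ* is independent of the rule A. -/

import Mathlib

open scoped ENNReal Classical

-- `lambdaMax P` : the largest absolute value of an eigenvalue of `P` other than the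
-- eigenvalue `1` (for an ergodic chain on a connected graph, `max(|λ₂|,…,|λₙ|)`).
noncomputable def lambdaMax {V : Type*} [Fintype V] [DecidableEq V] (P : Matrix V V ℝ) : ℝ :=
  sSup {x : ℝ | ∃ μ ∈ spectrum ℝ P, μ ≠ 1 ∧ x = |μ|}

-- Transition matrix of the lazy simple random walk on `G`.
noncomputable def lazyMatrix {V : Type*} [Fintype V] [DecidableEq V] (G : SimpleGraph V) :
    Matrix V V ℝ :=
  Matrix.of fun u v =>
    (if u = v then (1 : ℝ) / 2 else 0) +
      (if G.Adj u v then 1 / (2 * ((G.neighborSet u).ncard : ℝ)) else 0)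

-- The edges traversed by a history `h = [Xₜ, Xₜ₋₁, …, X₀]` (most recent vertex first).
def trav {V : Type*} (h : List V) : List (Sym2 V) :=
  (h.zip h.tail).map fun p => s(p.1, p.2)

-- One-step transition probabilities of the E-process with edge-selection rule `A`.
noncomputable def eStep {V : Type*} [Fintype V] (G : SimpleGraph V) (A : List V → V) :
    List V → V → ℝ
  | [], _ => 0
  | (v :: h), x =>
      if ∃ y : V, G.Adj v y ∧ s(v, y) ∉ trav (v :: h) then
        (if x = A (v :: h) then 1 else 0)
      else if G.Adj v x then 1 / ((G.neighborSet v).ncard : ℝ) else 0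

-- A rule is valid if, whenever the current vertex has an untraversed incident edge, it
-- selects a neighbour along such an untraversed edge.
def ValidRule {V : Type*} (G : SimpleGraph V) (A : List V → V) : Prop :=
  ∀ (v : V) (h : List V), (∃ y : V, G.Adj v y ∧ s(v, y) ∉ trav (v :: h)) →
    G.Adj v (A (v :: h)) ∧ s(v, A (v :: h)) ∉ trav (v :: h)

-- Probability that the E-process started at `u` produces the history `h`.
noncomputable def trajProb {V : Type*} [Fintype V] (G : SimpleGraph V) (A : List V → V)
    (u : V) : List V → ℝ
  | [] => 0
  | [x] => if x = u then 1 else 0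
  | (x :: y :: h) => eStep G A (y :: h) x * trajProb G A u (y :: h)

-- Probability that the E-process started at `u` has not visited every vertex by time `t`.
noncomputable def uncovProb {V : Type*} [Fintype V] (G : SimpleGraph V) (A : List V → V)
    (u : V) (t : ℕ) : ℝ :=
  ∑ f : Fin (t + 1) → V,
    if ∀ x : V, ∃ i, f i = x then 0 else trajProb G A u (List.ofFn f)

-- `G` is `ℓ`-good: for every vertex `v`, every nonempty subgraph of `G` in which every
-- vertex has even degree and which contains all edges of `G` incident with `v` has at
-- least `ℓ` vertices.
def EvenSubgraphGood {V : Type*} [Fintype V] (G : SimpleGraph V) (ℓ : ℕ) : Prop :=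
  ∀ (v : V) (H : G.Subgraph), H.verts.Nonempty →
    (∀ e ∈ G.edgeSet, v ∈ e → e ∈ H.edgeSet) →
    (∀ x : V, Even ((H.neighborSet x).ncard)) →
    ℓ ≤ H.verts.ncard

/-!
Call an edge blue while it is untraversed, and a step blue or red according to whether the rule or
chance chose it. All degrees being even, a maximal run of blue steps is a closed trail: it can only
get stuck where it started. Hence the red steps, with the blue runs cut out, form a simple random
walk, and at most `m` steps are blue.

At the start of a blue run all blue degrees are even, so an unvisited vertex `v` lies in an even
blue component containing all its edges, which has at least `ℓ` vertices, none of them yet departed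
from by a red step. Traversing a tree in this component, for any `k < ℓ` some closed walk of length
`2k` from `v` traces out a set `S` of `k + 1` vertices avoided by all red departures. There are at
most `n Δ^(2k)` such sets. Killing the random walk on `S` contracts the `L²` norm for the stationary
measure by the factor `1 - (1 - λmax) d(S) / m`, so each `S` is avoided for `T` steps with
probability at most `n exp(-(1 - λmax) δ (k + 1) T / m)`. The union bound with `k + 1` of order
`min(ℓ, log n)` gives the claim.
-/

section Reversible

open Finset Matrix

/-- Detailed balance: the chain with transition matrix `P` is reversible with respect to the
(unnormalised) measure `w`. -/
def IsReversible {V : Type*} (w : V → ℝ) (P : Matrix V V ℝ) : Prop :=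
  ∀ x y, w x * P x y = w y * P y x

/-- The chain `Q` killed at the vertices of `S`. -/
noncomputable def killedMatrix {V : Type*} (Q : Matrix V V ℝ) (S : Finset V) : Matrix V V ℝ :=
  Matrix.of fun x y => if x ∈ S ∨ y ∈ S then 0 else Q x y

namespace IsReversible

variable {V : Type*} {w : V → ℝ} {P Q : Matrix V V ℝ}

lemma add (hP : IsReversible w P) (hQ : IsReversible w Q) : IsReversible w (P + Q) := fun x y => by
  simp only [Matrix.add_apply, mul_add, hP x y, hQ x y]

lemma sub (hP : IsReversible w P) (hQ : IsReversible w Q) : IsReversible w (P - Q) := fun x y => by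
  simp only [Matrix.sub_apply, mul_sub, hP x y, hQ x y]

lemma smul (hP : IsReversible w P) (c : ℝ) : IsReversible w (c • P) := fun x y => by
  simp only [Matrix.smul_apply, smul_eq_mul, mul_left_comm _ c, hP x y]

lemma one [DecidableEq V] (w : V → ℝ) : IsReversible w (1 : Matrix V V ℝ) := fun x y => by
  rcases eq_or_ne x y with rfl | hxy
  · rfl
  · simp [hxy, hxy.symm]

lemma killedMatrix (hQ : IsReversible w Q) (S : Finset V) :
    IsReversible w (killedMatrix Q S) := fun x y => by
  simp only [_root_.killedMatrix, of_apply, or_comm (a := y ∈ S)]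
  split_ifs
  · simp
  · exact hQ x y

end IsReversible

variable {V : Type*} [Fintype V] {w : V → ℝ} {P : Matrix V V ℝ}

lemma wInner_eq_sum (w f g : V → ℝ) : ⟪f, g⟫_[ℝ, w] = ∑ x, w x * (f x * g x) := by
  simp [RCLike.wInner, mul_comm]

lemma wInner_one_one (w : V → ℝ) : ⟪(1 : V → ℝ), 1⟫_[ℝ, w] = ∑ x, w x := by
  simp [wInner_eq_sum]

/-- The rank-one matrix sending a function to its (constant) mean under the normalisation
of the weight `w`. -/
noncomputable def meanMatrix (w : V → ℝ) : Matrix V V ℝ :=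
  Matrix.of fun _ y => w y / ∑ z, w z

lemma meanMatrix_mulVec (w f : V → ℝ) (x : V) :
    (meanMatrix w *ᵥ f) x = ⟪1, f⟫_[ℝ, w] / ∑ z, w z := by
  simp [meanMatrix, mulVec, dotProduct, wInner_eq_sum, sum_div, div_mul_eq_mul_div]

lemma isReversible_meanMatrix (w : V → ℝ) : IsReversible w (meanMatrix w) := fun x y => by
  simp only [meanMatrix, of_apply]
  ring

lemma IsReversible.wInner_mulVec_comm (hP : IsReversible w P) (f g : V → ℝ) :
    ⟪P *ᵥ f, g⟫_[ℝ, w] = ⟪f, P *ᵥ g⟫_[ℝ, w] := by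
  simp only [wInner_eq_sum, mulVec, dotProduct, sum_mul, mul_sum]
  rw [sum_comm]
  refine sum_congr rfl fun y _ => sum_congr rfl fun x _ => ?_
  linear_combination f y * g x * hP x y

lemma IsReversible.wInner_mulVec_nonneg [DecidableEq V] (hw : ∀ x, 0 < w x)
    (hP : IsReversible w P) (hspec : ∀ μ ∈ spectrum ℝ P, 0 ≤ μ) (f : V → ℝ) :
    0 ≤ ⟪f, P *ᵥ f⟫_[ℝ, w] := by
  have hsqrt (x : V) : √(w x) ≠ 0 := (Real.sqrt_pos.mpr (hw x)).ne'
  have hsq (x : V) : √(w x) * √(w x) = w x := Real.mul_self_sqrt (hw x).le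
  set D : Matrix V V ℝ := diagonal fun x => √(w x) with hD
  set D' : Matrix V V ℝ := diagonal fun x => (√(w x))⁻¹
  have hDD' : D * D' = 1 := by simp [D, D', hsqrt]
  have hD'D : D' * D = 1 := by simp [D, D', hsqrt]
  -- Conjugating by `√w` turns detailed balance into symmetry.
  have hherm : (D * P * D').IsHermitian := by
    ext x y
    simp only [D, D', conjTranspose_apply, mul_diagonal, diagonal_mul, star_trivial]
    field_simp [hsqrt x, hsqrt y]
    linear_combination P y x * hsq y - P x y * hsq x - hP x y
  have hspectrum : spectrum ℝ (D * P * D') = spectrum ℝ P :=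
    spectrum.units_conjugate (u := ⟨D, D', hDD', hD'D⟩)
  have hpsd : (D * P * D').PosSemidef :=
    hherm.posSemidef_iff_eigenvalues_nonneg.mpr fun i =>
      hspec _ (hspectrum.subset (hherm.eigenvalues_mem_spectrum_real i))
  have hquad := hpsd.dotProduct_mulVec_nonneg (D *ᵥ f)
  rw [mulVec_mulVec, mul_assoc, hD'D, mul_one, ← mulVec_mulVec] at hquad
  refine hquad.trans_eq ?_
  simp only [wInner_eq_sum, hD, dotProduct, mulVec_diagonal, star_trivial]
  exact sum_congr rfl fun x _ => by linear_combination (f x * (P *ᵥ f) x) * hsq x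

-- Polarisation: evaluate the quadratic form at `c f ± P f`.
lemma IsReversible.wInner_mulVec_self_le (hP : IsReversible w P) {c : ℝ} (hc : 0 < c)
    (hquad : ∀ f, |⟪f, P *ᵥ f⟫_[ℝ, w]| ≤ c * ⟪f, f⟫_[ℝ, w]) (f : V → ℝ) :
    ⟪P *ᵥ f, P *ᵥ f⟫_[ℝ, w] ≤ c ^ 2 * ⟪f, f⟫_[ℝ, w] := by
  set g := P *ᵥ f with hg
  have hadd := (le_abs_self _).trans (hquad (c • f + g))
  have hsub := (neg_le_abs _).trans (hquad (c • f - g))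
  have hcross : ⟪f, P *ᵥ g⟫_[ℝ, w] = ⟪g, g⟫_[ℝ, w] := (hP.wInner_mulVec_comm f g).symm
  simp only [mulVec_add, mulVec_sub, mulVec_smul, RCLike.wInner_add_left, RCLike.wInner_add_right,
    RCLike.wInner_sub_left, RCLike.wInner_sub_right, RCLike.wInner_smul_left,
    RCLike.wInner_smul_right, star_trivial, smul_eq_mul, ← hg, hcross] at hadd hsub
  have hpolar : c * (2 * ⟪g, g⟫_[ℝ, w]) ≤ c * (2 * (c ^ 2 * ⟪f, f⟫_[ℝ, w])) := by linarith
  linarith [le_of_mul_le_mul_left hpolar hc]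

section Spectrum

variable [DecidableEq V]

lemma mem_spectrum_iff_exists_mulVec_eq {μ : ℝ} :
    μ ∈ spectrum ℝ P ↔ ∃ f : V → ℝ, f ≠ 0 ∧ P *ᵥ f = μ • f := by
  rw [← Matrix.spectrum_toLin', ← Module.End.hasEigenvalue_iff_mem_spectrum]
  refine ⟨fun h => ?_, fun ⟨f, hf, h⟩ => ?_⟩
  · obtain ⟨f, hf⟩ := h.exists_hasEigenvector
    exact ⟨f, hf.2, by simpa using hf.apply_eq_smul⟩
  · exact Module.End.hasEigenvalue_of_hasEigenvector
      (Module.End.hasEigenvector_iff.mpr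
        ⟨Module.End.mem_eigenspace_iff.mpr (by simpa using h), hf⟩)

lemma finite_abs_nontrivial_spectrum (P : Matrix V V ℝ) :
    {x : ℝ | ∃ μ ∈ spectrum ℝ P, μ ≠ 1 ∧ x = |μ|}.Finite := by
  have hfinite : (spectrum ℝ P).Finite := by
    rw [← Matrix.spectrum_toLin']
    exact Module.End.finite_spectrum _
  refine (hfinite.image (|·|)).subset ?_
  rintro _ ⟨μ, hμ, _, rfl⟩
  exact ⟨μ, hμ, rfl⟩

lemma abs_le_lambdaMax {μ : ℝ} (hμ : μ ∈ spectrum ℝ P) (hμ1 : μ ≠ 1) : |μ| ≤ lambdaMax P :=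
  le_csSup (finite_abs_nontrivial_spectrum P).bddAbove ⟨μ, hμ, hμ1, rfl⟩

lemma lambdaMax_lt_one (hspec : ∀ μ ∈ spectrum ℝ P, 0 ≤ μ ∧ μ ≤ 1) : lambdaMax P < 1 := by
  rcases Set.eq_empty_or_nonempty {x : ℝ | ∃ μ ∈ spectrum ℝ P, μ ≠ 1 ∧ x = |μ|} with
    hempty | hnonempty
  · rw [lambdaMax, hempty, Real.sSup_empty]
    exact one_pos
  · obtain ⟨μ, hμ, hμ1, hmax⟩ := hnonempty.csSup_mem (finite_abs_nontrivial_spectrum P)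
    rw [lambdaMax, hmax, abs_of_nonneg (hspec μ hμ).1]
    exact (hspec μ hμ).2.lt_of_ne hμ1

/-- The matrix `λmax I + (1 - λmax) Π - P`, where `Π` is the projection onto constants. Its
eigenvalues are `0` (on constants) and `λmax - μ` for the other eigenvalues `μ` of `P`, so that
its positivity is the Poincaré inequality for `P`. -/
noncomputable def gapMatrix (w : V → ℝ) (P : Matrix V V ℝ) : Matrix V V ℝ :=
  lambdaMax P • (1 : Matrix V V ℝ) + (1 - lambdaMax P) • meanMatrix w - P

lemma gapMatrix_mulVec (w : V → ℝ) (P : Matrix V V ℝ) (f : V → ℝ) :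
    gapMatrix w P *ᵥ f =
      lambdaMax P • f + (1 - lambdaMax P) • (⟪1, f⟫_[ℝ, w] / ∑ x, w x) • 1 - P *ᵥ f := by
  have hmean : meanMatrix w *ᵥ f = (⟪1, f⟫_[ℝ, w] / ∑ x, w x) • 1 := by
    ext x
    simp [meanMatrix_mulVec]
  simp only [gapMatrix, sub_mulVec, add_mulVec, smul_mulVec, one_mulVec, hmean]

lemma gapMatrix_mulVec_one (hW : ∑ x, w x ≠ 0) (hone : P *ᵥ 1 = 1) : gapMatrix w P *ᵥ 1 = 0 := by
  rw [gapMatrix_mulVec, hone, wInner_one_one, div_self hW]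
  module

namespace IsReversible

lemma gapMatrix (hP : IsReversible w P) : IsReversible w (gapMatrix w P) :=
  (((IsReversible.one w).smul _).add ((isReversible_meanMatrix w).smul _)).sub hP

lemma gapMatrix_spectrum_nonneg (hW : ∑ x, w x ≠ 0) (hP : IsReversible w P) (hone : P *ᵥ 1 = 1)
    (hconst : ∀ f, P *ᵥ f = f → ∀ x y, f x = f y) {e : ℝ}
    (he : e ∈ spectrum ℝ (_root_.gapMatrix w P)) : 0 ≤ e := by
  by_contra! hneg
  obtain ⟨f, hf0, hf⟩ := mem_spectrum_iff_exists_mulVec_eq.mp he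
  have hmean : ⟪1, f⟫_[ℝ, w] = 0 := by
    have horth := hP.gapMatrix.wInner_mulVec_comm 1 f
    rw [gapMatrix_mulVec_one hW hone, hf, RCLike.wInner_zero_left, RCLike.wInner_smul_right,
      smul_eq_mul] at horth
    exact (mul_eq_zero.mp horth.symm).resolve_left hneg.ne
  have hPf : P *ᵥ f = (lambdaMax P - e) • f := by
    rw [gapMatrix_mulVec, hmean, zero_div, zero_smul, smul_zero, add_zero] at hf
    rw [sub_smul, ← hf, sub_sub_cancel]
  have heig : lambdaMax P - e = 1 := by
    by_contra hne
    have hle := abs_le_lambdaMax (mem_spectrum_iff_exists_mulVec_eq.mpr ⟨f, hf0, hPf⟩) hne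
    linarith [le_abs_self (lambdaMax P - e)]
  obtain ⟨x₀, -⟩ := Function.ne_iff.mp hf0
  have hfconst : f = f x₀ • 1 := by
    ext x
    simpa using hconst f (by rw [hPf, heig, one_smul]) x x₀
  rw [hfconst, RCLike.wInner_smul_right, wInner_one_one, smul_eq_mul] at hmean
  exact hf0 (by rw [hfconst, (mul_eq_zero.mp hmean).resolve_right hW, zero_smul])

lemma wInner_mulVec_le_lambdaMax (hw : ∀ x, 0 < w x) (hP : IsReversible w P) (hone : P *ᵥ 1 = 1)
    (hconst : ∀ f, P *ᵥ f = f → ∀ x y, f x = f y) (f : V → ℝ) :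
    ⟪f, P *ᵥ f⟫_[ℝ, w] ≤
      lambdaMax P * ⟪f, f⟫_[ℝ, w] + (1 - lambdaMax P) * (⟪1, f⟫_[ℝ, w] ^ 2 / ∑ x, w x) := by
  rcases isEmpty_or_nonempty V with hV | hV
  · simp
  have hW : ∑ x, w x ≠ 0 := (sum_pos (fun x _ => hw x) univ_nonempty).ne'
  have hquad := hP.gapMatrix.wInner_mulVec_nonneg hw
    (fun _ => hP.gapMatrix_spectrum_nonneg hW hone hconst) f
  have hcomm : ⟪f, 1⟫_[ℝ, w] = ⟪1, f⟫_[ℝ, w] := by simp [wInner_eq_sum]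
  rw [gapMatrix_mulVec, RCLike.wInner_sub_right, RCLike.wInner_add_right, RCLike.wInner_smul_right,
    RCLike.wInner_smul_right, RCLike.wInner_smul_right, hcomm] at hquad
  simp only [smul_eq_mul] at hquad
  linear_combination hquad

end IsReversible

end Spectrum

/-- The lazy version of the chain `Q`, which stays put with probability `1/2`. -/
noncomputable def lazify [DecidableEq V] (Q : Matrix V V ℝ) : Matrix V V ℝ :=
  (1 / 2 : ℝ) • (1 + Q)

/-- `Q` is the transition matrix of an irreducible chain which is reversible with respect to the
positive weight `w`. Irreducibility is expressed by the constancy of harmonic functions. -/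
structure IsIrreducibleReversible (w : V → ℝ) (Q : Matrix V V ℝ) : Prop where
  weight_pos : ∀ x, 0 < w x
  nonneg : ∀ x y, 0 ≤ Q x y
  mulVec_one : Q *ᵥ 1 = 1
  reversible : IsReversible w Q
  eq_of_mulVec_eq : ∀ f, Q *ᵥ f = f → ∀ x y, f x = f y

/-- `avoidProb Q S k x` is the probability that none of the first `k` steps of the chain `Q`
started at `x` departs from a vertex of `S`. -/
noncomputable def avoidProb (Q : Matrix V V ℝ) (S : Finset V) : ℕ → V → ℝ
  | 0, _ => 1
  | k + 1, x => if x ∈ S then 0 else (Q *ᵥ avoidProb Q S k) x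

section Lazify

variable [DecidableEq V] {Q : Matrix V V ℝ}

lemma lazify_mulVec (Q : Matrix V V ℝ) (f : V → ℝ) :
    lazify Q *ᵥ f = (1 / 2 : ℝ) • (f + Q *ᵥ f) := by
  rw [lazify, smul_mulVec, add_mulVec, one_mulVec]

-- Gershgorin: the diagonal entries of `lazify Q` are at least `1/2` and its rows sum to `1`.
lemma spectrum_lazify_subset_Icc (hQ : ∀ x y, 0 ≤ Q x y) (hone : Q *ᵥ 1 = 1) :
    spectrum ℝ (lazify Q) ⊆ Set.Icc 0 1 := by
  intro μ hμ
  rw [← Matrix.spectrum_toLin', ← Module.End.hasEigenvalue_iff_mem_spectrum] at hμ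
  obtain ⟨x, hx⟩ := eigenvalue_mem_ball hμ
  have hnonneg (y : V) : 0 ≤ lazify Q x y := by
    have := hQ x y
    have : (0 : ℝ) ≤ (1 : Matrix V V ℝ) x y := by
      rw [Matrix.one_apply]
      positivity
    simp only [lazify, Matrix.smul_apply, Matrix.add_apply, smul_eq_mul]
    positivity
  have hdiag : 1 / 2 ≤ lazify Q x x := by
    simpa [lazify] using hQ x x
  have hrow : lazify Q x x + ∑ y ∈ univ.erase x, lazify Q x y = 1 := by
    rw [add_sum_erase _ _ (mem_univ x)]
    have hsum := congrFun (lazify_mulVec Q 1) x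
    rw [hone] at hsum
    norm_num at hsum
    simpa [mulVec, dotProduct] using hsum
  simp only [Real.norm_eq_abs, abs_of_nonneg (hnonneg _), Metric.mem_closedBall,
    Real.dist_eq, abs_le] at hx
  constructor <;> linarith

end Lazify

lemma abs_wInner_mulVec_le {Q : Matrix V V ℝ} (hw : 0 ≤ w) (hQ : ∀ x y, 0 ≤ Q x y) (f : V → ℝ) :
    |⟪f, Q *ᵥ f⟫_[ℝ, w]| ≤ ⟪|f|, Q *ᵥ |f|⟫_[ℝ, w] := by
  refine (RCLike.abs_wInner_le hw).trans ?_
  simp only [wInner_eq_sum, Pi.abs_apply]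
  refine sum_le_sum fun x _ => mul_le_mul_of_nonneg_left
    (mul_le_mul_of_nonneg_left ?_ (abs_nonneg _)) (hw x)
  refine (abs_sum_le_sum_abs _ _).trans_eq (sum_congr rfl fun y _ => ?_)
  rw [abs_mul, abs_of_nonneg (hQ x y), Pi.abs_apply]

lemma wInner_one_sq_le (hw : ∀ x, 0 ≤ w x) {S : Finset V} {f : V → ℝ} (hf : ∀ x ∈ S, f x = 0) :
    ⟪1, f⟫_[ℝ, w] ^ 2 ≤ (∑ x, w x - ∑ x ∈ S, w x) * ⟪f, f⟫_[ℝ, w] := by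
  have hcompl {g : V → ℝ} (hg : ∀ x ∈ S, g x = 0) : ∑ x, g x = ∑ x ∈ Sᶜ, g x := by
    rw [← sum_compl_add_sum S, sum_eq_zero hg, add_zero]
  have hweight : ∑ x, w x - ∑ x ∈ S, w x = ∑ x ∈ Sᶜ, w x := by
    rw [← sum_compl_add_sum S, add_sub_cancel_right]
  rw [wInner_eq_sum, wInner_eq_sum, hweight, hcompl fun x hx => by simp [hf x hx],
    hcompl fun x hx => by simp [hf x hx]]
  refine sum_sq_le_sum_mul_sum_of_sq_le_mul _ (fun x _ => hw x)
    (fun x _ => mul_nonneg (hw x) (mul_self_nonneg _)) fun x _ => le_of_eq ?_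
  simp only [Pi.one_apply]
  ring

lemma wInner_killedMatrix_mulVec (Q : Matrix V V ℝ) (S : Finset V) (f : V → ℝ) :
    ⟪f, killedMatrix Q S *ᵥ f⟫_[ℝ, w] =
      ⟪(S : Set V)ᶜ.indicator f, Q *ᵥ (S : Set V)ᶜ.indicator f⟫_[ℝ, w] := by
  simp only [wInner_eq_sum, mulVec, dotProduct, killedMatrix, of_apply, mul_sum]
  refine sum_congr rfl fun x _ => sum_congr rfl fun y _ => ?_
  by_cases hx : x ∈ S <;> by_cases hy : y ∈ S <;> simp [hx, hy]

section AvoidProb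

variable {Q : Matrix V V ℝ} {S : Finset V}

lemma avoidProb_eq_zero_of_mem {k : ℕ} (hk : k ≠ 0) {x : V} (hx : x ∈ S) :
    avoidProb Q S k x = 0 := by
  obtain ⟨k, rfl⟩ := Nat.exists_eq_succ_of_ne_zero hk
  exact if_pos hx

lemma avoidProb_nonneg (hQ : ∀ x y, 0 ≤ Q x y) (k : ℕ) (x : V) : 0 ≤ avoidProb Q S k x := by
  induction k generalizing x with
  | zero => exact zero_le_one
  | succ k ih =>
    rw [avoidProb]
    split_ifs
    · exact le_rfl
    · exact sum_nonneg fun y _ => mul_nonneg (hQ x y) (ih y)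

lemma avoidProb_one_le (hone : Q *ᵥ 1 = 1) (x : V) : avoidProb Q S 1 x ≤ 1 := by
  have hzero : avoidProb Q S 0 = 1 := rfl
  rw [avoidProb, hzero, hone]
  split_ifs
  · exact zero_le_one
  · exact le_rfl

lemma avoidProb_succ_succ (k : ℕ) :
    avoidProb Q S (k + 2) = killedMatrix Q S *ᵥ avoidProb Q S (k + 1) := by
  ext x
  rw [avoidProb]
  by_cases hx : x ∈ S
  · simp [hx, killedMatrix, mulVec, dotProduct]
  · rw [if_neg hx]
    refine sum_congr rfl fun y _ => ?_
    by_cases hy : y ∈ S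
    · rw [avoidProb_eq_zero_of_mem k.succ_ne_zero hy, mul_zero, mul_zero]
    · simp [killedMatrix, hx, hy]

end AvoidProb

namespace IsIrreducibleReversible

variable [DecidableEq V] {Q : Matrix V V ℝ}

lemma lambdaMax_lazify_lt_one (h : IsIrreducibleReversible w Q) :
    lambdaMax (lazify Q) < 1 :=
  lambdaMax_lt_one fun _ hμ => spectrum_lazify_subset_Icc h.nonneg h.mulVec_one hμ

lemma wInner_mulVec_le (h : IsIrreducibleReversible w Q) (f : V → ℝ) :
    ⟪f, Q *ᵥ f⟫_[ℝ, w] ≤ (2 * lambdaMax (lazify Q) - 1) * ⟪f, f⟫_[ℝ, w] +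
      2 * (1 - lambdaMax (lazify Q)) * (⟪1, f⟫_[ℝ, w] ^ 2 / ∑ x, w x) := by
  have hrev : IsReversible w (lazify Q) := ((IsReversible.one w).add h.reversible).smul _
  have hone : lazify Q *ᵥ 1 = 1 := by
    rw [lazify_mulVec, h.mulVec_one]
    module
  have hconst (g : V → ℝ) (hg : lazify Q *ᵥ g = g) (x y : V) : g x = g y := by
    refine h.eq_of_mulVec_eq g ?_ x y
    rw [lazify_mulVec] at hg
    linear_combination (norm := module) (2 : ℝ) • hg
  have hpoincare := hrev.wInner_mulVec_le_lambdaMax h.weight_pos hone hconst f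
  rw [lazify_mulVec, RCLike.wInner_smul_right, RCLike.wInner_add_right, smul_eq_mul] at hpoincare
  linear_combination 2 * hpoincare

lemma abs_wInner_mulVec_le_of_eq_zero (h : IsIrreducibleReversible w Q)
    {S : Finset V} {f : V → ℝ} (hf : ∀ x ∈ S, f x = 0) :
    |⟪f, Q *ᵥ f⟫_[ℝ, w]| ≤
      (1 - 2 * (1 - lambdaMax (lazify Q)) * ((∑ x ∈ S, w x) / ∑ x, w x)) * ⟪f, f⟫_[ℝ, w] := by
  have hgap : 0 ≤ 1 - lambdaMax (lazify Q) := by linarith [h.lambdaMax_lazify_lt_one]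
  set gap := 1 - lambdaMax (lazify Q) with hgap_def
  rcases isEmpty_or_nonempty V with hV | hV
  · simp
  have hW : 0 < ∑ x, w x := sum_pos (fun x _ => h.weight_pos x) univ_nonempty
  have hself : ⟪|f|, |f|⟫_[ℝ, w] = ⟪f, f⟫_[ℝ, w] := by simp [wInner_eq_sum]
  have hmean := wInner_one_sq_le (fun x => (h.weight_pos x).le)
    (f := |f|) (S := S) fun x hx => by simp [hf x hx]
  rw [hself] at hmean
  calc |⟪f, Q *ᵥ f⟫_[ℝ, w]|
      ≤ ⟪|f|, Q *ᵥ |f|⟫_[ℝ, w] := abs_wInner_mulVec_le (fun x => (h.weight_pos x).le) h.nonneg f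
    _ ≤ (1 - 2 * gap) * ⟪f, f⟫_[ℝ, w] + 2 * gap * (⟪1, |f|⟫_[ℝ, w] ^ 2 / ∑ x, w x) := by
        have hbound := h.wInner_mulVec_le |f|
        rw [hself] at hbound
        linear_combination hbound - 2 * ⟪f, f⟫_[ℝ, w] * hgap_def
    _ ≤ (1 - 2 * gap) * ⟪f, f⟫_[ℝ, w] +
          2 * gap * ((∑ x, w x - ∑ x ∈ S, w x) * ⟪f, f⟫_[ℝ, w] / ∑ x, w x) := by
        gcongr
    _ = (1 - 2 * gap * ((∑ x ∈ S, w x) / ∑ x, w x)) * ⟪f, f⟫_[ℝ, w] := by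
        field_simp
        ring

lemma wInner_killedMatrix_mulVec_self_le (h : IsIrreducibleReversible w Q)
    (S : Finset V) (f : V → ℝ) :
    ⟪killedMatrix Q S *ᵥ f, killedMatrix Q S *ᵥ f⟫_[ℝ, w] ≤
      Real.exp (-(2 * (1 - lambdaMax (lazify Q)) * ((∑ x ∈ S, w x) / ∑ x, w x))) ^ 2 *
        ⟪f, f⟫_[ℝ, w] := by
  refine (h.reversible.killedMatrix S).wInner_mulVec_self_le (Real.exp_pos _) (fun g => ?_) f
  set g' : V → ℝ := (S : Set V)ᶜ.indicator g with hg'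
  have hself_nonneg : 0 ≤ ⟪g', g'⟫_[ℝ, w] := by
    rw [wInner_eq_sum]
    exact sum_nonneg fun x _ => mul_nonneg (h.weight_pos x).le (mul_self_nonneg _)
  have hself_le : ⟪g', g'⟫_[ℝ, w] ≤ ⟪g, g⟫_[ℝ, w] := by
    simp only [wInner_eq_sum]
    refine sum_le_sum fun x _ => mul_le_mul_of_nonneg_left ?_ (h.weight_pos x).le
    by_cases hx : x ∈ S <;> simp [hg', hx, mul_self_nonneg]
  rw [wInner_killedMatrix_mulVec]
  refine (h.abs_wInner_mulVec_le_of_eq_zero (S := S) fun x hx =>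
    Set.indicator_of_notMem (by simpa using hx) g).trans ?_
  refine (mul_le_mul_of_nonneg_right ?_ hself_nonneg).trans
    (mul_le_mul_of_nonneg_left hself_le (Real.exp_pos _).le)
  linarith [Real.add_one_le_exp
    (-(2 * (1 - lambdaMax (lazify Q)) * ((∑ x ∈ S, w x) / ∑ x, w x)))]

lemma wInner_avoidProb_self_le (h : IsIrreducibleReversible w Q)
    (S : Finset V) (T : ℕ) :
    ⟪avoidProb Q S (T + 1), avoidProb Q S (T + 1)⟫_[ℝ, w] ≤
      Real.exp (-(2 * (1 - lambdaMax (lazify Q)) * ((∑ x ∈ S, w x) / ∑ x, w x) * T)) ^ 2 *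
        ∑ x, w x := by
  induction T with
  | zero =>
    rw [wInner_eq_sum]
    norm_num
    refine sum_le_sum fun x _ => mul_le_of_le_one_right (h.weight_pos x).le ?_
    exact mul_le_one₀ (avoidProb_one_le h.mulVec_one x) (avoidProb_nonneg h.nonneg 1 x)
      (avoidProb_one_le h.mulVec_one x)
  | succ T ih =>
    rw [avoidProb_succ_succ]
    refine (h.wInner_killedMatrix_mulVec_self_le S _).trans
      ((mul_le_mul_of_nonneg_left ih (sq_nonneg _)).trans_eq ?_)
    rw [← mul_assoc, ← mul_pow, ← Real.exp_add]
    push_cast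
    ring_nf

lemma avoidProb_succ_le (h : IsIrreducibleReversible w Q) {N : ℝ}
    (hw : ∀ x, 1 ≤ w x) (hN : 0 ≤ N) (hW : ∑ x, w x ≤ N ^ 2) (S : Finset V) (T : ℕ) (u : V) :
    avoidProb Q S (T + 1) u ≤
      N * Real.exp (-(2 * (1 - lambdaMax (lazify Q)) * ((∑ x ∈ S, w x) / ∑ x, w x) * T)) := by
  set r := Real.exp (-(2 * (1 - lambdaMax (lazify Q)) * ((∑ x ∈ S, w x) / ∑ x, w x) * T))
  refine le_of_sq_le_sq ?_ (by positivity)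
  calc avoidProb Q S (T + 1) u ^ 2
      ≤ w u * (avoidProb Q S (T + 1) u * avoidProb Q S (T + 1) u) := by
        rw [← sq]
        exact le_mul_of_one_le_left (sq_nonneg _) (hw u)
    _ ≤ ⟪avoidProb Q S (T + 1), avoidProb Q S (T + 1)⟫_[ℝ, w] := by
        rw [wInner_eq_sum]
        exact single_le_sum (f := fun x => w x * (avoidProb Q S (T + 1) x *
          avoidProb Q S (T + 1) x)) (fun x _ => mul_nonneg (h.weight_pos x).le
            (mul_self_nonneg _)) (mem_univ u)
    _ ≤ r ^ 2 * N ^ 2 := (h.wInner_avoidProb_self_le S T).trans (by gcongr)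
    _ = (N * r) ^ 2 := by ring

end IsIrreducibleReversible

end Reversible

section RandomWalk

open Finset Matrix

variable {V : Type*}

/-- The degree of a vertex as a real weight: the stationary measure of the simple random walk. It
uses `Set.ncard`, as the E-process does, to be independent of decidability instances. -/
noncomputable def degWeight (G : SimpleGraph V) (x : V) : ℝ := ((G.neighborSet x).ncard : ℝ)

/-- Transition matrix of the simple random walk on `G`. -/
noncomputable def walkMatrix (G : SimpleGraph V) : Matrix V V ℝ :=
  Matrix.of fun x y => if G.Adj x y then 1 / degWeight G x else 0

lemma isReversible_walkMatrix {G : SimpleGraph V} (hdeg : ∀ x, 0 < degWeight G x) :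
    IsReversible (degWeight G) (walkMatrix G) := fun x y => by
  by_cases hxy : G.Adj x y
  · simp [walkMatrix, hxy, hxy.symm, (hdeg _).ne']
  · simp [walkMatrix, hxy, mt SimpleGraph.Adj.symm hxy]

lemma walkMatrix_nonneg {G : SimpleGraph V} (x y : V) : 0 ≤ walkMatrix G x y := by
  rw [walkMatrix, of_apply, degWeight]
  positivity

lemma ncard_neighborSet_eq_degree (G : SimpleGraph V) (x : V) [Fintype (G.neighborSet x)] :
    (G.neighborSet x).ncard = G.degree x := by
  rw [Set.ncard_eq_toFinset_card']
  rfl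

lemma one_le_degWeight [Finite V] [Nontrivial V] {G : SimpleGraph V} (hG : G.Connected) (x : V) :
    1 ≤ degWeight G x := by
  cases nonempty_fintype V
  rw [degWeight, ncard_neighborSet_eq_degree]
  exact_mod_cast hG.preconnected.degree_pos_of_nontrivial x

variable [Fintype V]

lemma walkMatrix_mulVec (G : SimpleGraph V) (f : V → ℝ) (x : V) :
    (walkMatrix G *ᵥ f) x = (∑ y ∈ G.neighborFinset x, f y) / degWeight G x := by
  rw [SimpleGraph.neighborFinset_eq_filter, sum_filter, sum_div]
  refine sum_congr rfl fun y _ => ?_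
  by_cases hxy : G.Adj x y <;> simp [walkMatrix, hxy, div_eq_inv_mul]

lemma isIrreducibleReversible_walkMatrix {G : SimpleGraph V} (hG : G.Connected)
    (hdeg : ∀ x, 0 < degWeight G x) : IsIrreducibleReversible (degWeight G) (walkMatrix G) where
  weight_pos := hdeg
  nonneg := walkMatrix_nonneg
  mulVec_one := by
    ext x
    rw [walkMatrix_mulVec, div_eq_iff (hdeg x).ne', degWeight, ncard_neighborSet_eq_degree]
    simp
  reversible := isReversible_walkMatrix hdeg
  eq_of_mulVec_eq f hf x y := by
    have hlap : G.lapMatrix ℝ *ᵥ f = 0 := by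
      ext x
      have hx := congrFun hf x
      rw [walkMatrix_mulVec, div_eq_iff (hdeg x).ne', degWeight, ncard_neighborSet_eq_degree] at hx
      rw [SimpleGraph.lapMatrix_mulVec_apply, hx, Pi.zero_apply]
      ring
    exact G.lapMatrix_mulVec_eq_zero_iff_forall_reachable.mp hlap x y (hG.preconnected x y)

lemma lazify_walkMatrix [DecidableEq V] (G : SimpleGraph V) :
    lazify (walkMatrix G) = lazyMatrix G := by
  ext x y
  simp only [lazify, lazyMatrix, walkMatrix, degWeight, Matrix.smul_apply, Matrix.add_apply,
    Matrix.one_apply, of_apply, smul_eq_mul]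
  split_ifs <;> ring

lemma sum_degWeight (G : SimpleGraph V) [DecidableRel G.Adj] :
    ∑ x, degWeight G x = 2 * #G.edgeFinset := by
  simp only [degWeight, ncard_neighborSet_eq_degree]
  exact_mod_cast G.sum_degrees_eq_twice_card_edges

lemma sum_degWeight_le_sq (G : SimpleGraph V) :
    ∑ x, degWeight G x ≤ (Fintype.card V : ℝ) ^ 2 := by
  have hdeg (x : V) : degWeight G x ≤ Fintype.card V := by
    rw [degWeight, ncard_neighborSet_eq_degree]
    exact_mod_cast (G.degree_lt_card_verts x).le
  calc ∑ x, degWeight G x ≤ ∑ _x : V, (Fintype.card V : ℝ) := sum_le_sum fun x _ => hdeg x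
    _ = (Fintype.card V : ℝ) ^ 2 := by simp [sq]

lemma lambdaMax_lazyMatrix_lt_one [Nontrivial V] [DecidableEq V] {G : SimpleGraph V}
    (hG : G.Connected) : lambdaMax (lazyMatrix G) < 1 := by
  rw [← lazify_walkMatrix]
  exact (isIrreducibleReversible_walkMatrix hG fun x =>
    one_pos.trans_le (one_le_degWeight hG x)).lambdaMax_lazify_lt_one

lemma avoidProb_walkMatrix_le [Nontrivial V] [DecidableEq V] {G : SimpleGraph V}
    [DecidableRel G.Adj] (hG : G.Connected) (S : Finset V) (T : ℕ) (u : V) :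
    avoidProb (walkMatrix G) S (T + 1) u ≤ Fintype.card V *
      Real.exp (-((1 - lambdaMax (lazyMatrix G)) * (G.minDegree * #S) * T / #G.edgeFinset)) := by
  have hwalk := isIrreducibleReversible_walkMatrix hG fun x =>
    one_pos.trans_le (one_le_degWeight hG x)
  have hgap : 0 ≤ 1 - lambdaMax (lazyMatrix G) := by linarith [lambdaMax_lazyMatrix_lt_one hG]
  have hweight : (G.minDegree * #S : ℝ) ≤ ∑ x ∈ S, degWeight G x := by
    rw [mul_comm, ← nsmul_eq_mul]
    refine card_nsmul_le_sum S _ _ fun x _ => ?_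
    rw [degWeight, ncard_neighborSet_eq_degree]
    exact_mod_cast G.minDegree_le_degree x
  refine (hwalk.avoidProb_succ_le (one_le_degWeight hG) (Nat.cast_nonneg _)
    (sum_degWeight_le_sq G) S T u).trans ?_
  rw [lazify_walkMatrix, sum_degWeight]
  gcongr Fintype.card V * Real.exp (-?_)
  calc (1 - lambdaMax (lazyMatrix G)) * (G.minDegree * #S) * T / #G.edgeFinset
      ≤ (1 - lambdaMax (lazyMatrix G)) * (∑ x ∈ S, degWeight G x) * T / #G.edgeFinset := by gcongr
    _ = _ := by ring

end RandomWalk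

section ClosedWalks

open Finset SimpleGraph

variable {V : Type*}

-- Depth-first traversal of a tree: insert the detour `a → b → a` along an edge leaving the walk.
lemma exists_closed_walk_of_le_ncard_reachable {B : SimpleGraph V} {v : V} {k : ℕ}
    (hk : k + 1 ≤ {x | B.Reachable v x}.ncard) :
    ∃ p : B.Walk v v, p.length = 2 * k ∧ #p.support.toFinset = k + 1 := by
  induction k with
  | zero => exact ⟨Walk.nil, by simp⟩
  | succ k ih =>
    obtain ⟨p, hlength, hcard⟩ := ih (by omega)
    obtain ⟨x, ⟨q⟩, hx⟩ : ∃ x ∈ {x | B.Reachable v x}, x ∉ (p.support.toFinset : Set V) := by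
      refine Set.exists_mem_notMem_of_ncard_lt_ncard ?_
      rw [Set.ncard_coe_finset]
      omega
    obtain ⟨d, -, ha, hb⟩ := q.exists_boundary_dart _ (by simp) hx
    simp only [mem_coe, List.mem_toFinset] at ha hb
    refine ⟨(p.takeUntil _ ha).append (.cons d.adj (.cons d.adj.symm (p.dropUntil _ ha))), ?_, ?_⟩
    · have hsplit := congrArg Walk.length (p.take_spec ha)
      simp only [Walk.length_append, Walk.length_cons] at hsplit ⊢
      omega
    · have hsupport : ((p.takeUntil _ ha).append
          (.cons d.adj (.cons d.adj.symm (p.dropUntil _ ha)))).support.toFinset =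
            insert d.snd p.support.toFinset := by
        ext y
        have hsplit : y ∈ p.support ↔
            y ∈ (p.takeUntil _ ha).support ∨ y ∈ (p.dropUntil _ ha).support := by
          rw [← Walk.mem_support_append_iff, p.take_spec ha]
        simp only [List.mem_toFinset, mem_insert, hsplit, Walk.mem_support_append_iff,
          Walk.support_cons, List.mem_cons]
        grind [Walk.start_mem_support]
      rw [hsupport, card_insert_of_notMem (by simpa using hb), hcard]

variable [Fintype V] (G : SimpleGraph V)

/-- The sets of `k + 1` vertices traced out by closed walks of length `2 * k`. Every connected
set of `k + 1` vertices is one of these, by traversing a spanning tree. -/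
noncomputable def closedWalkSupports (k : ℕ) : Finset (Finset V) :=
  univ.biUnion fun v =>
    ((G.finsetWalkLength (2 * k) v v).image fun p => p.support.toFinset).filter (#· = k + 1)

lemma card_eq_of_mem_closedWalkSupports {k : ℕ} {S : Finset V} (hS : S ∈ closedWalkSupports G k) :
    #S = k + 1 := by
  obtain ⟨v, -, hv⟩ := mem_biUnion.mp hS
  exact (mem_filter.mp hv).2

lemma sum_card_finsetWalkLength_le {D : ℕ} (hD : ∀ x, G.degree x ≤ D) (k : ℕ) (x : V) :
    ∑ y, #(G.finsetWalkLength k x y) ≤ D ^ k := by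
  induction k generalizing x with
  | zero =>
    have hcard (y : V) : #(G.finsetWalkLength 0 x y) = if x = y then 1 else 0 := by
      rcases eq_or_ne x y with rfl | hxy
      · simp [finsetWalkLength]
      · simp [finsetWalkLength, hxy]
    simp [hcard]
  | succ k ih =>
    calc ∑ y, #(G.finsetWalkLength (k + 1) x y)
        ≤ ∑ y, ∑ z : G.neighborSet x, #(G.finsetWalkLength k z y) :=
          sum_le_sum fun y _ => by
            rw [finsetWalkLength]
            exact card_biUnion_le.trans_eq (sum_congr rfl fun z _ => card_map _)
      _ = ∑ z : G.neighborSet x, ∑ y, #(G.finsetWalkLength k z y) := sum_comm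
      _ ≤ ∑ _z : G.neighborSet x, D ^ k := sum_le_sum fun z _ => ih z
      _ = G.degree x * D ^ k := by
          rw [sum_const, Finset.card_univ, card_neighborSet_eq_degree, smul_eq_mul]
      _ ≤ D ^ (k + 1) := by
          rw [pow_succ']
          exact Nat.mul_le_mul_right _ (hD x)

lemma card_closedWalkSupports_le {D : ℕ} (hD : ∀ x, G.degree x ≤ D) (k : ℕ) :
    #(closedWalkSupports G k) ≤ Fintype.card V * D ^ (2 * k) := by
  refine card_biUnion_le_card_mul _ _ _ fun v _ => ?_
  calc #(((G.finsetWalkLength (2 * k) v v).image fun p => p.support.toFinset).filter (#· = k + 1))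
      ≤ #(G.finsetWalkLength (2 * k) v v) := (card_filter_le _ _).trans card_image_le
    _ ≤ ∑ y, #(G.finsetWalkLength (2 * k) v y) :=
        single_le_sum (f := fun y => #(G.finsetWalkLength (2 * k) v y))
          (fun _ _ => Nat.zero_le _) (mem_univ v)
    _ ≤ D ^ (2 * k) := sum_card_finsetWalkLength_le G hD _ v

variable {G}

lemma exists_mem_closedWalkSupports {B : SimpleGraph V} (hBG : B ≤ G) {v : V} {k : ℕ}
    (hk : k + 1 ≤ {x | B.Reachable v x}.ncard) :
    ∃ S ∈ closedWalkSupports G k, ∀ x ∈ S, B.Reachable v x := by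
  obtain ⟨p, hlength, hcard⟩ := exists_closed_walk_of_le_ncard_reachable hk
  refine ⟨p.support.toFinset, mem_biUnion.mpr ⟨v, mem_univ v, mem_filter.mpr ⟨?_, hcard⟩⟩,
    fun x hx => ?_⟩
  · refine mem_image.mpr ⟨p.mapLe hBG, ?_, by rw [Walk.support_mapLe_eq_support]⟩
    rw [mem_finsetWalkLength_iff, Walk.length_mapLe, hlength]
  · exact ⟨p.takeUntil x (by simpa using hx)⟩

lemma EvenSubgraphGood.le_ncard_reachable {ℓ : ℕ} (hgood : EvenSubgraphGood G ℓ)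
    {B : SimpleGraph V} (hBG : B ≤ G) (heven : ∀ x, Even (B.neighborSet x).ncard) {v : V}
    (hv : ∀ y, G.Adj v y → B.Adj v y) : ℓ ≤ {x | B.Reachable v x}.ncard := by
  let component : G.Subgraph :=
    { verts := {x | B.Reachable v x}
      Adj := fun x y => B.Adj x y ∧ B.Reachable v x
      adj_sub := fun hxy => hBG hxy.1
      edge_vert := fun hxy => hxy.2
      symm := ⟨fun _ _ hxy => ⟨hxy.1.symm, hxy.2.trans hxy.1.reachable⟩⟩ }
  refine hgood v component ⟨v, Reachable.refl v⟩ (fun e he hve => ?_) fun x => ?_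
  · obtain ⟨y, rfl⟩ := Sym2.mem_iff_exists.mp hve
    exact ⟨hv y he, Reachable.refl v⟩
  · by_cases hx : B.Reachable v x
    · have hnbr : component.neighborSet x = B.neighborSet x :=
        Set.ext fun y => ⟨fun hxy => hxy.1, fun hxy => ⟨hxy, hx⟩⟩
      rw [hnbr]
      exact heven x
    · have hnbr : component.neighborSet x = ∅ := Set.ext fun y => by
        simp [component, Subgraph.neighborSet, hx]
      simp [hnbr]

end ClosedWalks

section Histories

open SimpleGraph

variable {V : Type*} {G : SimpleGraph V} {u x y z : V} {h : List V}

lemma trav_cons_cons (x y : V) (h : List V) : trav (x :: y :: h) = s(x, y) :: trav (y :: h) := by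
  simp [trav]

lemma mem_of_mk_mem_trav (hxy : s(x, y) ∈ trav h) : x ∈ h := by
  obtain ⟨⟨a, b⟩, hab, heq⟩ := List.mem_map.mp hxy
  obtain ⟨ha, hb⟩ := List.of_mem_zip hab
  rcases Sym2.eq_iff.mp heq with ⟨rfl, -⟩ | ⟨-, rfl⟩
  · exact ha
  · exact List.mem_of_mem_tail hb

/-- The graph of edges that the history `h` has not yet traversed, which the paper calls blue. -/
def blueGraph (G : SimpleGraph V) (h : List V) : SimpleGraph V :=
  G.deleteEdges {e | e ∈ trav h}

lemma blueGraph_adj : (blueGraph G h).Adj x y ↔ G.Adj x y ∧ s(x, y) ∉ trav h :=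
  deleteEdges_adj

lemma blueGraph_le : blueGraph G h ≤ G :=
  deleteEdges_le _

lemma blueGraph_cons_cons :
    blueGraph G (x :: y :: h) = (blueGraph G (y :: h)).deleteEdges {s(x, y)} := by
  ext a b
  simp only [blueGraph_adj, deleteEdges_adj, trav_cons_cons, List.mem_cons,
    Set.mem_singleton_iff]
  tauto

/-- Some edge at `v` is untraversed; at the current vertex this is the condition under which the
E-process follows its rule instead of making a random step. -/
def HasBlueEdge (G : SimpleGraph V) (h : List V) (v : V) : Prop :=
  ∃ y, G.Adj v y ∧ s(v, y) ∉ trav h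

lemma hasBlueEdge_of_cons (hxy : HasBlueEdge G (x :: h) z) : HasBlueEdge G h z := by
  obtain ⟨y, hadj, hy⟩ := hxy
  refine ⟨y, hadj, fun hmem => hy ?_⟩
  cases h with
  | nil => simp [trav] at hmem
  | cons w h => exact trav_cons_cons x w h ▸ List.mem_cons_of_mem _ hmem

/-- The vertices of `h`, most recent first, from which a random (red) step departs. Every vertex of
`h` counts as departed from, so the walk at `x` with past `h` has red departures
`redDepartures G h`. -/
noncomputable def redDepartures (G : SimpleGraph V) : List V → List V
  | [] => []
  | y :: h => if HasBlueEdge G (y :: h) y then redDepartures G h else y :: redDepartures G h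

/-- The vertex at which the current maximal run of rule-driven (blue) steps started, for the walk
at `x` with past `h`; it is `x` itself if the last step was random. -/
noncomputable def phaseStart (G : SimpleGraph V) (x : V) : List V → V
  | [] => x
  | y :: h => if HasBlueEdge G (y :: h) y then phaseStart G y h else x

lemma redDepartures_subset : redDepartures G h ⊆ h := by
  induction h with
  | nil => exact List.Subset.refl _
  | cons y h ih =>
    rw [redDepartures]
    split_ifs
    · exact List.subset_cons_of_subset _ ih
    · exact List.cons_subset_cons _ ih

lemma not_hasBlueEdge_of_mem_redDepartures (hz : z ∈ redDepartures G h) : ¬HasBlueEdge G h z := by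
  induction h with
  | nil => simp [redDepartures] at hz
  | cons y h ih =>
    rw [redDepartures] at hz
    split_ifs at hz with hblue
    · exact fun hz' => ih hz (hasBlueEdge_of_cons hz')
    · rcases List.mem_cons.mp hz with rfl | hz
      · exact hblue
      · exact fun hz' => ih hz (hasBlueEdge_of_cons hz')

/-- `EHistory G u x h`: the E-process from `u` can be at `x` with past `h`, under some rule. -/
inductive EHistory (G : SimpleGraph V) (u : V) : V → List V → Prop
  | start : EHistory G u u []
  | blue {x y : V} {h : List V} (hist : EHistory G u y h) (adj : G.Adj y x)
      (new : s(y, x) ∉ trav (y :: h)) : EHistory G u x (y :: h)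
  | red {x y : V} {h : List V} (hist : EHistory G u y h) (full : ¬HasBlueEdge G (y :: h) y)
      (adj : G.Adj y x) : EHistory G u x (y :: h)

lemma mk_mem_trav_of_not_hasBlueEdge (hfull : ¬HasBlueEdge G h y) (hadj : G.Adj y x) :
    s(x, y) ∈ trav h := by
  by_contra hnew
  exact hfull ⟨x, hadj, by rwa [Sym2.eq_swap]⟩

lemma blueGraph_cons_of_not_hasBlueEdge (hfull : ¬HasBlueEdge G (y :: h) y) (hadj : G.Adj y x) :
    blueGraph G (x :: y :: h) = blueGraph G (y :: h) := by
  rw [blueGraph_cons_cons, deleteEdges_eq_self, Set.disjoint_singleton_right, mem_edgeSet,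
    blueGraph_adj]
  exact fun hblue => hblue.2 (mk_mem_trav_of_not_hasBlueEdge hfull hadj)

namespace EHistory

lemma mem_edgeSet_of_mem_trav (hist : EHistory G u x h) {e : Sym2 V} (he : e ∈ trav (x :: h)) :
    e ∈ G.edgeSet := by
  induction hist with
  | start => simp [trav] at he
  | blue _ adj _ ih | red _ _ adj ih =>
    rw [trav_cons_cons] at he
    rcases List.mem_cons.mp he with rfl | he
    · exact adj.symm
    · exact ih he

lemma length_eq (hist : EHistory G u x h) :
    h.length = (redDepartures G h).length + (trav (x :: h)).toFinset.card := by
  induction hist with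
  | start => simp [redDepartures, trav]
  | @blue x y h _ adj new ih =>
    have hblue : HasBlueEdge G (y :: h) y := ⟨x, adj, new⟩
    have hnew : s(x, y) ∉ (trav (y :: h)).toFinset := by
      rwa [List.mem_toFinset, Sym2.eq_swap]
    rw [redDepartures, if_pos hblue, trav_cons_cons, List.toFinset_cons,
      Finset.card_insert_of_notMem hnew, List.length_cons, ih, add_assoc]
  | @red x y h _ full adj ih =>
    have hold : s(x, y) ∈ (trav (y :: h)).toFinset :=
      List.mem_toFinset.mpr (mk_mem_trav_of_not_hasBlueEdge full adj)
    rw [redDepartures, if_neg full, trav_cons_cons, List.toFinset_cons,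
      Finset.insert_eq_of_mem hold, List.length_cons, List.length_cons, ih]
    ring

lemma length_le_length_redDepartures_add [Fintype G.edgeSet] (hist : EHistory G u x h) :
    h.length ≤ (redDepartures G h).length + G.edgeFinset.card := by
  rw [hist.length_eq]
  gcongr
  exact fun e he => mem_edgeFinset.mpr (hist.mem_edgeSet_of_mem_trav (List.mem_toFinset.mp he))

end EHistory

lemma even_ncard_neighborSet_deleteEdges_iff [Finite V] {B : SimpleGraph V} {a b : V}
    (hab : B.Adj a b) (z : V) : Even ((B.deleteEdges {s(a, b)}).neighborSet z).ncard ↔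
      (Even (B.neighborSet z).ncard ↔ z ≠ a ∧ z ≠ b) := by
  have hremove {z w : V} (hz : B.Adj z w) (hzw : s(z, w) = s(a, b)) :
      Even ((B.deleteEdges {s(a, b)}).neighborSet z).ncard ↔ ¬Even (B.neighborSet z).ncard := by
    have hdiff : (B.deleteEdges {s(a, b)}).neighborSet z = B.neighborSet z \ {w} := by
      ext y
      simp [← hzw, hz.ne]
    rw [hdiff, ← Set.ncard_sdiff_singleton_add_one (s := B.neighborSet z) hz, Nat.even_add_one,
      not_not]
  by_cases hza : z = a
  · subst hza
    simpa using hremove hab rfl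
  by_cases hzb : z = b
  · subst hzb
    simpa using hremove hab.symm Sym2.eq_swap
  have hsame : (B.deleteEdges {s(a, b)}).neighborSet z = B.neighborSet z := by
    ext y
    simp [hza, hzb]
  simp [hsame, hza, hzb]

lemma neighborSet_blueGraph_eq_empty (hfull : ¬HasBlueEdge G h x) :
    (blueGraph G h).neighborSet x = ∅ :=
  Set.eq_empty_of_forall_notMem fun y hy => hfull ⟨y, blueGraph_adj.mp hy⟩

variable [Finite V]

-- Each blue phase is a trail, so it changes the parity of the blue degree only at its two ends.
lemma EHistory.even_ncard_neighborSet_blueGraph_iff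
    (heven : ∀ z, Even (G.neighborSet z).ncard) (hist : EHistory G u x h) (z : V) :
    Even ((blueGraph G (x :: h)).neighborSet z).ncard ↔ (z = x ↔ z = phaseStart G x h) := by
  induction hist generalizing z with
  | start => simpa [blueGraph, trav, phaseStart] using heven z
  | @blue x y h _ adj new ih =>
    have hblue : HasBlueEdge G (y :: h) y := ⟨x, adj, new⟩
    have hadj : (blueGraph G (y :: h)).Adj x y := (blueGraph_adj.mpr ⟨adj, new⟩).symm
    have hne : x ≠ y := adj.ne'
    rw [blueGraph_cons_cons, even_ncard_neighborSet_deleteEdges_iff hadj, ih, phaseStart,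
      if_pos hblue]
    grind
  | @red x y h _ full adj ih =>
    have hclosed : y = phaseStart G y h := by
      simpa [neighborSet_blueGraph_eq_empty full] using ih y
    rw [blueGraph_cons_of_not_hasBlueEdge full adj, ih, ← hclosed, phaseStart, if_neg full]
    simp

lemma EHistory.phaseStart_eq (heven : ∀ z, Even (G.neighborSet z).ncard)
    (hist : EHistory G u x h) (hfull : ¬HasBlueEdge G (x :: h) x) : phaseStart G x h = x := by
  simpa [neighborSet_blueGraph_eq_empty hfull, eq_comm] using
    hist.even_ncard_neighborSet_blueGraph_iff heven x

lemma EHistory.even_ncard_neighborSet_blueGraph (heven : ∀ z, Even (G.neighborSet z).ncard)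
    (hist : EHistory G u x h) (hfull : ¬HasBlueEdge G (x :: h) x) (z : V) :
    Even ((blueGraph G (x :: h)).neighborSet z).ncard := by
  rw [hist.even_ncard_neighborSet_blueGraph_iff heven, hist.phaseStart_eq heven hfull]

end Histories

section UnvisitedVertex

open Finset SimpleGraph

variable {V : Type*} [Fintype V] {G : SimpleGraph V} {u v x : V} {h : List V} {k ℓ : ℕ}

lemma exists_closedWalkSupport_of_even_blueGraph (hgood : EvenSubgraphGood G ℓ) (hk : k + 1 ≤ ℓ)
    (heven : ∀ z, Even ((blueGraph G h).neighborSet z).ncard) (hv : v ∉ h) :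
    ∃ S ∈ closedWalkSupports G k, ∀ z ∈ redDepartures G h, z ∉ S := by
  have hvblue (y : V) (hadj : G.Adj v y) : (blueGraph G h).Adj v y :=
    blueGraph_adj.mpr ⟨hadj, fun hmem => hv (mem_of_mk_mem_trav hmem)⟩
  obtain ⟨S, hS, hreach⟩ := exists_mem_closedWalkSupports blueGraph_le
    (hk.trans (hgood.le_ncard_reachable blueGraph_le heven hvblue))
  refine ⟨S, hS, fun z hz hzS => ?_⟩
  obtain ⟨p⟩ := (hreach z hzS).symm
  have hzv : z ≠ v := fun hzv => hv (hzv ▸ redDepartures_subset hz)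
  exact not_hasBlueEdge_of_mem_redDepartures hz
    ⟨_, blueGraph_adj.mp (p.adj_snd (Walk.not_nil_of_ne hzv))⟩

lemma EHistory.exists_closedWalkSupport (hgood : EvenSubgraphGood G ℓ) (hk : k + 1 ≤ ℓ)
    (heven : ∀ z, Even (G.neighborSet z).ncard) (hist : EHistory G u x h) (hv : v ∉ h) :
    ∃ S ∈ closedWalkSupports G k, ∀ z ∈ redDepartures G h, z ∉ S := by
  induction hist with
  | start =>
    refine exists_closedWalkSupport_of_even_blueGraph hgood hk (fun z => ?_) hv
    simpa [blueGraph, trav] using heven z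
  | @blue x y h _ adj new ih =>
    rw [redDepartures, if_pos ⟨x, adj, new⟩]
    exact ih (List.not_mem_of_not_mem_cons hv)
  | red hist full _ _ =>
    exact exists_closedWalkSupport_of_even_blueGraph hgood hk
      (hist.even_ncard_neighborSet_blueGraph heven full) hv

end UnvisitedVertex

section Supermartingale

open Finset Matrix

variable {V : Type*} [Fintype V] {G : SimpleGraph V} {A : List V → V} {u : V}

lemma eStep_of_hasBlueEdge {y : V} {h : List V} (hblue : HasBlueEdge G (y :: h) y) (x : V) :
    eStep G A (y :: h) x = if x = A (y :: h) then 1 else 0 :=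
  if_pos hblue

lemma eStep_of_not_hasBlueEdge {y : V} {h : List V} (hfull : ¬HasBlueEdge G (y :: h) y) (x : V) :
    eStep G A (y :: h) x = walkMatrix G y x :=
  if_neg hfull

lemma eStep_nonneg (h : List V) (x : V) : 0 ≤ eStep G A h x := by
  cases h with
  | nil => exact le_rfl
  | cons y h =>
    rw [eStep]
    positivity

lemma trajProb_nonneg (h : List V) : 0 ≤ trajProb G A u h := by
  induction h with
  | nil => exact le_rfl
  | cons x h ih =>
    cases h with
    | nil => rw [trajProb]; positivity
    | cons y h => exact mul_nonneg (eStep_nonneg _ _) ih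

lemma eHistory_of_trajProb_ne_zero (hA : ValidRule G A) {x : V} {h : List V}
    (hne : trajProb G A u (x :: h) ≠ 0) : EHistory G u x h := by
  induction h generalizing x with
  | nil =>
    rw [trajProb, ite_ne_right_iff] at hne
    exact hne.1 ▸ .start
  | cons y h ih =>
    obtain ⟨hstep, htraj⟩ := mul_ne_zero_iff.mp hne
    by_cases hblue : HasBlueEdge G (y :: h) y
    · rw [eStep_of_hasBlueEdge hblue, ite_ne_right_iff] at hstep
      obtain ⟨adj, new⟩ := hA y h hblue
      rw [← hstep.1] at adj new
      exact .blue (ih htraj) adj new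
    · rw [eStep_of_not_hasBlueEdge hblue, walkMatrix, of_apply, ite_ne_right_iff] at hstep
      exact .red (ih htraj) hblue hstep.1

/-- The probability of the history `h` times the conditional probability that a simple random walk,
continuing the red steps of `h` up to `T` steps in all, departs from no vertex of `S`. -/
noncomputable def potential (G : SimpleGraph V) (A : List V → V) (u : V) (S : Finset V) (T : ℕ) :
    List V → ℝ
  | [] => 0
  | x :: h =>
      if ∀ z ∈ redDepartures G h, z ∉ S then
        trajProb G A u (x :: h) *
          avoidProb (walkMatrix G) S (T - (redDepartures G h).length) (phaseStart G x h)
      else 0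

lemma potential_nonneg (S : Finset V) (T : ℕ) (h : List V) : 0 ≤ potential G A u S T h := by
  cases h with
  | nil => exact le_rfl
  | cons x h =>
    rw [potential]
    split_ifs
    · exact mul_nonneg (trajProb_nonneg _) (avoidProb_nonneg walkMatrix_nonneg _ _)
    · exact le_rfl

lemma sum_walkMatrix_mul_avoidProb (hrow : walkMatrix G *ᵥ 1 = 1) {S : Finset V} {y : V}
    (hy : y ∉ S) (k : ℕ) :
    ∑ x, walkMatrix G y x * avoidProb (walkMatrix G) S (k - 1) x =
      avoidProb (walkMatrix G) S k y := by
  cases k with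
  | zero => simpa [avoidProb, mulVec, dotProduct] using congrFun hrow y
  | succ k => rw [avoidProb, if_neg hy]; rfl

lemma sum_potential_cons_le (heven : ∀ z, Even (G.neighborSet z).ncard)
    (hrow : walkMatrix G *ᵥ 1 = 1) (hA : ValidRule G A) (S : Finset V) (T : ℕ) (y : V)
    (h : List V) :
    ∑ x, potential G A u S T (x :: y :: h) ≤ potential G A u S T (y :: h) := by
  by_cases htraj : trajProb G A u (y :: h) = 0
  · simp [potential, trajProb, htraj]
  by_cases hblue : HasBlueEdge G (y :: h) y
  · simp [potential, redDepartures, phaseStart, trajProb, hblue, eStep_of_hasBlueEdge hblue]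
  by_cases havoid : ∀ z ∈ y :: redDepartures G h, z ∉ S
  · obtain ⟨hy, hpast⟩ := List.forall_mem_cons.mp havoid
    have hstart := (eHistory_of_trajProb_ne_zero hA htraj).phaseStart_eq heven hblue
    simp only [potential, redDepartures, phaseStart, trajProb, if_neg hblue, if_pos havoid,
      if_pos hpast, eStep_of_not_hasBlueEdge hblue, hstart, List.length_cons, ← Nat.sub_sub]
    rw [← sum_walkMatrix_mul_avoidProb hrow hy, mul_sum]
    exact (sum_congr rfl fun x _ => by ring).le
  · simp only [potential, redDepartures, if_neg hblue, if_neg havoid, sum_const_zero]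
    exact potential_nonneg (h := y :: h) S T

lemma sum_ofFn_succ (F : List V → ℝ) (t : ℕ) :
    ∑ f : Fin (t + 1) → V, F (List.ofFn f) = ∑ f : Fin t → V, ∑ x, F (x :: List.ofFn f) := by
  rw [← (Fin.consEquiv fun _ => V).sum_comp, Fintype.sum_prod_type_right]
  simp [Fin.consEquiv, List.ofFn_succ]

lemma sum_potential_le (heven : ∀ z, Even (G.neighborSet z).ncard)
    (hrow : walkMatrix G *ᵥ 1 = 1) (hA : ValidRule G A) (S : Finset V) (T t : ℕ) :
    ∑ f : Fin (t + 1) → V, potential G A u S T (List.ofFn f) ≤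
      avoidProb (walkMatrix G) S T u := by
  induction t with
  | zero =>
    rw [sum_ofFn_succ]
    simp [potential, trajProb, redDepartures, phaseStart]
  | succ t ih =>
    rw [sum_ofFn_succ]
    refine (sum_le_sum fun f _ => ?_).trans ih
    rw [List.ofFn_succ]
    exact sum_potential_cons_le heven hrow hA S T _ _

-- With `T` red steps made, the potential of a set avoided by them is the full history probability.
lemma EHistory.trajProb_le_sum_potential {k ℓ T : ℕ} {x v : V} {h : List V}
    [Fintype G.edgeSet] (hgood : EvenSubgraphGood G ℓ) (hk : k + 1 ≤ ℓ)
    (heven : ∀ z, Even (G.neighborSet z).ncard) (hist : EHistory G u x h) (hv : v ∉ h)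
    (hT : T + #G.edgeFinset ≤ h.length) :
    trajProb G A u (x :: h) ≤ ∑ S ∈ closedWalkSupports G k, potential G A u S T (x :: h) := by
  obtain ⟨S, hS, havoid⟩ := hist.exists_closedWalkSupport hgood hk heven hv
  have hlength := hist.length_le_length_redDepartures_add
  have hpotential : potential G A u S T (x :: h) = trajProb G A u (x :: h) := by
    rw [potential, if_pos havoid, Nat.sub_eq_zero_of_le (by omega), avoidProb, mul_one]
  rw [← hpotential]
  exact single_le_sum (f := fun S => potential G A u S T (x :: h))
    (fun S _ => potential_nonneg S T _) hS

lemma uncovProb_le_sum_avoidProb {k ℓ T t : ℕ} [Fintype G.edgeSet]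
    (hgood : EvenSubgraphGood G ℓ) (hk : k + 1 ≤ ℓ)
    (heven : ∀ z, Even (G.neighborSet z).ncard) (hrow : walkMatrix G *ᵥ 1 = 1)
    (hA : ValidRule G A) (hT : T + #G.edgeFinset ≤ t) :
    uncovProb G A u t ≤ ∑ S ∈ closedWalkSupports G k, avoidProb (walkMatrix G) S T u := by
  have hbound (f : Fin (t + 1) → V) :
      (if ∀ x, ∃ i, f i = x then 0 else trajProb G A u (List.ofFn f)) ≤
        ∑ S ∈ closedWalkSupports G k, potential G A u S T (List.ofFn f) := by
    have hnonneg : 0 ≤ ∑ S ∈ closedWalkSupports G k, potential G A u S T (List.ofFn f) :=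
      sum_nonneg fun S _ => potential_nonneg S T _
    split_ifs with hcover
    · exact hnonneg
    by_cases htraj : trajProb G A u (List.ofFn f) = 0
    · rwa [htraj]
    obtain ⟨v, hv⟩ := not_forall.mp hcover
    rw [List.ofFn_succ] at htraj ⊢
    refine (eHistory_of_trajProb_ne_zero hA htraj).trajProb_le_sum_potential (v := v) hgood hk
      heven (fun hmem => hv ?_) (by rwa [List.length_ofFn])
    obtain ⟨i, hi⟩ := List.mem_ofFn.mp hmem
    exact ⟨i.succ, hi⟩
  calc uncovProb G A u t
      ≤ ∑ f : Fin (t + 1) → V, ∑ S ∈ closedWalkSupports G k, potential G A u S T (List.ofFn f) :=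
        sum_le_sum fun f _ => hbound f
    _ = ∑ S ∈ closedWalkSupports G k, ∑ f : Fin (t + 1) → V, potential G A u S T (List.ofFn f) :=
        sum_comm
    _ ≤ ∑ S ∈ closedWalkSupports G k, avoidProb (walkMatrix G) S T u :=
        sum_le_sum fun S _ => sum_potential_le heven hrow hA S T t

end Supermartingale

section CoverTime

open Finset

lemma exists_nat_succ_le_min_le_two_mul {ℓ : ℕ} (hℓ : 0 < ℓ) {a : ℝ} (ha : 1 ≤ a) :
    ∃ k : ℕ, k + 1 ≤ ℓ ∧ (k + 1 : ℝ) ≤ a ∧ min (ℓ : ℝ) a ≤ 2 * (k + 1) := by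
  have hfloor : 1 ≤ ⌊a⌋₊ := Nat.one_le_floor_iff a |>.mpr ha
  obtain ⟨k, hk⟩ := Nat.exists_eq_succ_of_ne_zero (lt_min hℓ hfloor).ne'
  have hmin : ((min ℓ ⌊a⌋₊ : ℕ) : ℝ) = k + 1 := by rw [hk, Nat.cast_succ]
  refine ⟨k, hk.ge.trans (min_le_left _ _), ?_, ?_⟩
  · rw [← hmin]
    exact (Nat.cast_le.mpr (min_le_right _ _)).trans (Nat.floor_le (by linarith))
  · have hfloor' : (1 : ℝ) ≤ ⌊a⌋₊ := by exact_mod_cast hfloor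
    rw [← hmin, Nat.cast_min, mul_min_of_nonneg _ _ zero_le_two]
    exact min_le_min (by linarith [Nat.cast_nonneg (α := ℝ) ℓ])
      (by linarith [Nat.lt_floor_add_one a])

lemma mul_pow_mul_exp_neg_le_one_div_cube {n D r : ℝ} {k : ℕ} (hn : 1 ≤ n) (hD : 2 ≤ D)
    (hk : k ≤ Real.log n) (hr : 5 * D * Real.log n ≤ r) :
    n * D ^ (2 * k) * (n * Real.exp (-r)) ≤ 1 / n ^ 3 := by
  have hlog : 0 ≤ Real.log n := Real.log_nonneg hn
  have hexp : n = Real.exp (Real.log n) := (Real.exp_log (by linarith)).symm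
  have hpow : D ^ (2 * k) ≤ Real.exp (2 * D * Real.log n) := by
    calc D ^ (2 * k) ≤ Real.exp D ^ (2 * k) := by
          gcongr
          linarith [Real.add_one_le_exp D]
      _ = Real.exp (2 * D * k) := by
          rw [← Real.exp_nat_mul]
          push_cast
          ring_nf
      _ ≤ Real.exp (2 * D * Real.log n) := by gcongr
  calc n * D ^ (2 * k) * (n * Real.exp (-r))
      ≤ n * Real.exp (2 * D * Real.log n) * (n * Real.exp (-(5 * D * Real.log n))) := by gcongr
    _ = Real.exp (Real.log n + 2 * D * Real.log n + (Real.log n + -(5 * D * Real.log n))) := by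
        rw [Real.exp_add, Real.exp_add, Real.exp_add, ← hexp]
    _ ≤ Real.exp (-(3 * Real.log n)) := by
        gcongr
        nlinarith [hlog]
    _ = 1 / n ^ 3 := by
        rw [one_div, ← Real.exp_log (show 0 < n ^ 3 by positivity), Real.log_pow, Real.exp_neg,
          Nat.cast_ofNat]

lemma five_mul_mul_le_decay_exponent {m Δ L δ w γ : ℝ} (hm : 0 < m) (hΔ : 0 ≤ Δ)
    (hL : 0 ≤ L) (hδ : 0 < δ) (hw : 0 < w) (hγ : 0 < γ) {K T : ℝ} (hK : w ≤ 2 * K)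
    (hT : 10 * m * (Δ * L / (δ * w * γ)) ≤ T) :
    5 * Δ * L ≤ γ * (δ * K) * T / m := by
  calc 5 * Δ * L = γ * (δ * (w / 2)) * (10 * m * (Δ * L / (δ * w * γ))) / m := by
        field_simp
        ring
    _ ≤ γ * (δ * K) * T / m := by
        have hK' : w / 2 ≤ K := by linarith
        have hK0 : 0 ≤ K := by linarith
        gcongr

lemma add_one_add_le_ceil {m : ℕ} (hm : 0 < m) {r : ℝ} (hr : 0 ≤ r) :
    ⌈10 * m * r⌉₊ + 1 + m ≤ ⌈10 * m * (1 + r)⌉₊ := by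
  have hsplit : 10 * m * (1 + r) = 10 * m * r + (10 * m : ℕ) := by
    push_cast
    ring
  rw [hsplit, Nat.ceil_add_natCast (by positivity)]
  omega

variable {V : Type*} [Fintype V] {G : SimpleGraph V} {A : List V → V} {u : V}

lemma uncovProb_of_subsingleton [Subsingleton V] (t : ℕ) : uncovProb G A u t = 0 :=
  sum_eq_zero fun _ _ => if_pos fun _ => ⟨0, Subsingleton.elim _ _⟩

lemma log_div_min_mul_gap_nonneg [DecidableEq V] {ℓ : ℕ} (hG : G.Connected) :
    0 ≤ Real.log (Fintype.card V) /
      (min (ℓ : ℝ) (Real.log (Fintype.card V)) * (1 - lambdaMax (lazyMatrix G))) := by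
  have hlog : 0 ≤ Real.log (Fintype.card V) := Real.log_natCast_nonneg _
  rcases subsingleton_or_nontrivial V
  · have hcard : Fintype.card V ≤ 1 := Fintype.card_le_one_iff_subsingleton.mpr ‹_›
    rw [hlog.antisymm' (Real.log_nonpos (Nat.cast_nonneg _) (by exact_mod_cast hcard)), zero_div]
  · have hgap : 0 < 1 - lambdaMax (lazyMatrix G) := sub_pos.mpr (lambdaMax_lazyMatrix_lt_one hG)
    positivity

variable [DecidableRel G.Adj]

lemma two_mul_card_edgeFinset_le : 2 * #G.edgeFinset ≤ G.maxDegree * Fintype.card V := by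
  rw [← G.sum_degrees_eq_twice_card_edges, mul_comm, ← smul_eq_mul, ← card_univ]
  exact sum_le_card_nsmul _ _ _ fun x _ => G.degree_le_maxDegree x

lemma two_le_degree_of_even [Nontrivial V] (hG : G.Connected) (heven : ∀ x, Even (G.degree x))
    (x : V) : 2 ≤ G.degree x := by
  obtain ⟨r, hr⟩ := heven x
  have hpos := hG.preconnected.degree_pos_of_nontrivial x
  omega

variable [DecidableEq V] {k ℓ : ℕ}

lemma uncovProb_le_mul_exp [Nontrivial V] (hG : G.Connected) (heven : ∀ x, Even (G.degree x))
    (hgood : EvenSubgraphGood G ℓ) (hk : k + 1 ≤ ℓ) (hA : ValidRule G A) {T t : ℕ}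
    (hT : T + 1 + #G.edgeFinset ≤ t) :
    uncovProb G A u t ≤ Fintype.card V * G.maxDegree ^ (2 * k) * (Fintype.card V *
      Real.exp (-((1 - lambdaMax (lazyMatrix G)) * (G.minDegree * (k + 1)) * T /
        #G.edgeFinset))) := by
  have hwalk := isIrreducibleReversible_walkMatrix hG fun x =>
    one_pos.trans_le (one_le_degWeight hG x)
  have heven' (z : V) : Even (G.neighborSet z).ncard :=
    ncard_neighborSet_eq_degree G z ▸ heven z
  have hcard : (#(closedWalkSupports G k) : ℝ) ≤ Fintype.card V * G.maxDegree ^ (2 * k) := by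
    exact_mod_cast card_closedWalkSupports_le G (fun x => by convert G.degree_le_maxDegree x) k
  calc uncovProb G A u t
      ≤ ∑ S ∈ closedWalkSupports G k, avoidProb (walkMatrix G) S (T + 1) u :=
        uncovProb_le_sum_avoidProb hgood hk heven' hwalk.mulVec_one hA hT
    _ ≤ ∑ _S ∈ closedWalkSupports G k, Fintype.card V *
          Real.exp (-((1 - lambdaMax (lazyMatrix G)) * (G.minDegree * (k + 1)) * T /
            #G.edgeFinset)) := by
        refine sum_le_sum fun S hS => ?_
        have hcardS : (#S : ℝ) = k + 1 := by
          exact_mod_cast card_eq_of_mem_closedWalkSupports G hS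
        exact hcardS ▸ avoidProb_walkMatrix_le hG S T u
    _ ≤ _ := by
        rw [sum_const, nsmul_eq_mul]
        gcongr

/-- The time `τ*` of the paper, with constant `C`. -/
noncomputable def coverTimeBound (G : SimpleGraph V) [DecidableRel G.Adj] (ℓ : ℕ) (C : ℝ) : ℝ :=
  C * (#G.edgeFinset : ℝ) *
    (1 + (G.maxDegree : ℝ) * Real.log (Fintype.card V) /
      ((G.minDegree : ℝ) * min (ℓ : ℝ) (Real.log (Fintype.card V)) *
        (1 - lambdaMax (lazyMatrix G))))

lemma uncovProb_le_one_div_card_cube_of_nontrivial [Nontrivial V] (hG : G.Connected)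
    (heven : ∀ x, Even (G.degree x)) (hℓ : 0 < ℓ) (hgood : EvenSubgraphGood G ℓ)
    (hA : ValidRule G A) :
    uncovProb G A u ⌈coverTimeBound G ℓ 10⌉₊ ≤ 1 / (Fintype.card V : ℝ) ^ 3 := by
  have hdeg : 2 ≤ G.minDegree :=
    G.le_minDegree_of_forall_le_degree 2 (two_le_degree_of_even hG heven)
  have hmax : (2 : ℝ) ≤ G.maxDegree := by exact_mod_cast hdeg.trans G.minDegree_le_maxDegree
  have hmin : (0 : ℝ) < G.minDegree := by exact_mod_cast two_pos.trans_le hdeg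
  have hcard : (3 : ℝ) ≤ Fintype.card V := by
    exact_mod_cast (two_le_degree_of_even hG heven u).trans_lt (G.degree_lt_card_verts u)
  have hedges : 0 < #G.edgeFinset := by
    rw [card_pos, SimpleGraph.edgeFinset_nonempty, SimpleGraph.ne_bot_iff_exists_adj]
    exact ⟨u, (G.degree_pos_iff_exists_adj u).mp (hG.preconnected.degree_pos_of_nontrivial u)⟩
  have hlog : 1 ≤ Real.log (Fintype.card V) :=
    (Real.le_log_iff_exp_le (by linarith)).mpr (Real.exp_one_lt_three.le.trans hcard)
  have hgap : 0 < 1 - lambdaMax (lazyMatrix G) := sub_pos.mpr (lambdaMax_lazyMatrix_lt_one hG)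
  have hscale : 0 < min (ℓ : ℝ) (Real.log (Fintype.card V)) :=
    lt_min (by exact_mod_cast hℓ) (by linarith)
  obtain ⟨k, hkℓ, hklog, hkmin⟩ := exists_nat_succ_le_min_le_two_mul hℓ hlog
  refine (uncovProb_le_mul_exp hG heven hgood hkℓ hA
    (add_one_add_le_ceil hedges (by positivity))).trans ?_
  exact mul_pow_mul_exp_neg_le_one_div_cube (by linarith) hmax (by linarith)
    (five_mul_mul_le_decay_exponent (by exact_mod_cast hedges) (by linarith) (by linarith) hmin
      hscale hgap hkmin (Nat.le_ceil _))

lemma uncovProb_le_one_div_card_cube (hG : G.Connected) (heven : ∀ x, Even (G.degree x))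
    (hℓ : 0 < ℓ) (hgood : EvenSubgraphGood G ℓ) (hA : ValidRule G A) :
    uncovProb G A u ⌈coverTimeBound G ℓ 10⌉₊ ≤ 1 / (Fintype.card V : ℝ) ^ 3 := by
  rcases subsingleton_or_nontrivial V
  · rw [uncovProb_of_subsingleton]
    positivity
  · exact uncovProb_le_one_div_card_cube_of_nontrivial hG heven hℓ hgood hA

lemma coverTimeBound_le_of_maxDegree_le (hG : G.Connected) {D : ℕ} (hD : G.maxDegree ≤ D) {C : ℝ}
    (hC : 0 ≤ C) :
    coverTimeBound G ℓ C ≤ C * ((D : ℝ) + 1) ^ 2 * (Fintype.card V : ℝ) *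
      (1 + Real.log (Fintype.card V) /
        (min (ℓ : ℝ) (Real.log (Fintype.card V)) * (1 - lambdaMax (lazyMatrix G)))) := by
  have hratio := log_div_min_mul_gap_nonneg (ℓ := ℓ) hG
  have hmax : (G.maxDegree : ℝ) ≤ D := by exact_mod_cast hD
  rw [coverTimeBound, mul_assoc (G.minDegree : ℝ), mul_div_mul_comm]
  set ratio := Real.log (Fintype.card V) /
    (min (ℓ : ℝ) (Real.log (Fintype.card V)) * (1 - lambdaMax (lazyMatrix G)))
  have hedges : (#G.edgeFinset : ℝ) ≤ (D + 1) * Fintype.card V := by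
    have htwo : (2 * #G.edgeFinset : ℝ) ≤ G.maxDegree * Fintype.card V := by
      exact_mod_cast two_mul_card_edgeFinset_le
    nlinarith [Nat.cast_nonneg (α := ℝ) (Fintype.card V)]
  have hdegrees : (G.maxDegree : ℝ) / G.minDegree ≤ D := by
    rcases G.minDegree.eq_zero_or_pos with hzero | hpos
    · simp [hzero]
    · exact (div_le_self (Nat.cast_nonneg _) (by exact_mod_cast hpos)).trans hmax
  calc C * #G.edgeFinset * (1 + G.maxDegree / G.minDegree * ratio)
      ≤ C * ((D + 1) * Fintype.card V) * (1 + D * ratio) := by gcongr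
    _ ≤ C * ((D + 1) * Fintype.card V) * ((D + 1) * (1 + ratio)) := by
        gcongr
        nlinarith [Nat.cast_nonneg (α := ℝ) D]
    _ = C * (D + 1) ^ 2 * Fintype.card V * (1 + ratio) := by ring

end CoverTime

/-- There are constants `c, C > 0` such that for every connected `ℓ`-good
graph `G` on `n` vertices and `m` edges with all degrees even, minimum degree `δ` and
maximum degree `Δ`, setting
`τ* = C·m·(1 + Δ·log n/(δ·min(ℓ, log n)·(1 − λmax)))`,
for every rule `A` and every start vertex, the probability that some vertex of `G` remains
unvisited after `τ*` steps of the E-process is at most `c/n³`.  In particular, whenever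
`Δ` is bounded by a constant `Δ₀`, we have `τ* ≤ B·n·(1 + log n/(min(ℓ, log n)·(1 − λmax)))`
for a constant `B` depending only on `Δ₀`; and `τ*` is independent of the rule `A`. -/
theorem stmt7 :
    ∃ c C : ℝ, 0 < c ∧ 0 < C ∧
      (∀ (V : Type) [Fintype V] [DecidableEq V] (G : SimpleGraph V) [DecidableRel G.Adj]
          (ℓ : ℕ),
        G.Connected → (∀ x : V, Even (G.degree x)) → 0 < ℓ → EvenSubgraphGood G ℓ →
        ∀ A : List V → V, ValidRule G A → ∀ u : V,
          uncovProb G A u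
              ⌈C * (G.edgeFinset.card : ℝ) *
                (1 + (G.maxDegree : ℝ) * Real.log (Fintype.card V) /
                  ((G.minDegree : ℝ) * min (ℓ : ℝ) (Real.log (Fintype.card V)) *
                    (1 - lambdaMax (lazyMatrix G))))⌉₊ ≤
            c / (Fintype.card V : ℝ) ^ 3) ∧
      (∀ Δ₀ : ℕ, ∃ B : ℝ, 0 < B ∧
        ∀ (V : Type) [Fintype V] [DecidableEq V] (G : SimpleGraph V) [DecidableRel G.Adj]
            (ℓ : ℕ),
          G.Connected → (∀ x : V, Even (G.degree x)) → 0 < ℓ → EvenSubgraphGood G ℓ →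
          G.maxDegree ≤ Δ₀ →
          C * (G.edgeFinset.card : ℝ) *
              (1 + (G.maxDegree : ℝ) * Real.log (Fintype.card V) /
                ((G.minDegree : ℝ) * min (ℓ : ℝ) (Real.log (Fintype.card V)) *
                  (1 - lambdaMax (lazyMatrix G)))) ≤
            B * (Fintype.card V : ℝ) *
              (1 + Real.log (Fintype.card V) /
                (min (ℓ : ℝ) (Real.log (Fintype.card V)) *
                  (1 - lambdaMax (lazyMatrix G))))) := by
  refine ⟨1, 10, one_pos, by norm_num, ?_, fun Δ₀ => ⟨10 * ((Δ₀ : ℝ) + 1) ^ 2, by positivity, ?_⟩⟩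
  · intro V _ _ G _ ℓ hG heven hℓ hgood A hA u
    exact uncovProb_le_one_div_card_cube hG heven hℓ hgood hA
  · intro V _ _ G _ ℓ hG _ _ _ hΔ
    exact coverTimeBound_le_of_maxDegree_le hG hΔ (by norm_num)
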